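/- Let H be a semisimple Hopf algebra over k (hence also cosemisimple), let R be a finitely generated subring of k carrying a Hopf R-order H_R of H, and for a prime p let H_p = H_R ⊗_R F̄_p via a ring homomorphism ψ: R → F̄_p. Then for all sufficiently large primes p, the Hopf algebra H_p over F̄_p is semisimple and cosemisimple. -/

import Mathlib

open TensorProduct

noncomputable def bcComul (R S H : Type) [CommRing R] [CommRing S] [Algebra R S]
    [AddCommGroup H] [Module R H] (comul : H →ₗ[R] H ⊗[R] H) :
    S ⊗[R] H →ₗ[S] (S ⊗[R] H) ⊗[S] (S ⊗[R] H) :=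
  (TensorProduct.AlgebraTensorModule.distribBaseChange R S H H).toLinearMap ∘ₗ
    comul.baseChange S

noncomputable def bcCounit (R S H : Type) [CommRing R] [CommRing S] [Algebra R S]
    [AddCommGroup H] [Module R H] (counit : H →ₗ[R] R) :
    S ⊗[R] H →ₗ[S] S :=
  (TensorProduct.AlgebraTensorModule.rid R S S).toLinearMap ∘ₗ counit.baseChange S

/-- The natural map `M ⊗[R] M → H ⊗[k] H` induced by an `R`-linear map `ι : M → H`,
where `R → k`. -/
noncomputable def ordTensor (R k : Type) [CommRing R] [CommRing k] [Algebra R k]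
    (H : Type) [AddCommGroup H] [Module k H] [Module R H] [IsScalarTower R k H]
    (M : Type) [AddCommGroup M] [Module R M] (ι : M →ₗ[R] H) :
    M ⊗[R] M →ₗ[R] H ⊗[k] H :=
  TensorProduct.lift (LinearMap.mk₂ R (fun x y => ι x ⊗ₜ[k] ι y)
    (fun x x' y => by simp [map_add, TensorProduct.add_tmul])
    (fun r x y => by
      show ι (r • x) ⊗ₜ[k] ι y = r • (ι x ⊗ₜ[k] ι y)
      rw [map_smul, ← algebraMap_smul k r (ι x), TensorProduct.smul_tmul',
        algebraMap_smul])
    (fun x y y' => by simp [map_add, TensorProduct.tmul_add])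
    (fun r x y => by
      show ι x ⊗ₜ[k] ι (r • y) = r • (ι x ⊗ₜ[k] ι y)
      rw [map_smul, ← algebraMap_smul k r (ι y), TensorProduct.tmul_smul,
        algebraMap_smul]))

/-- `H` is cosemisimple (with explicitly supplied comultiplication):  there exists a
normalized two-sided integral `λ : H → k`, i.e. `λ(1) = 1` and
`∑ h₁ λ(h₂) = λ(h) 1 = ∑ λ(h₁) h₂`. -/
def IsCosemisimpleWith (k : Type) [CommRing k] (H : Type) [Ring H] [Module k H]
    (comul : H →ₗ[k] H ⊗[k] H) : Prop :=
  ∃ lam : H →ₗ[k] k, lam 1 = 1 ∧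
    (∀ h : H, (TensorProduct.rid k H) ((LinearMap.lTensor H lam) (comul h)) = lam h • 1) ∧
    (∀ h : H, (TensorProduct.lid k H) ((LinearMap.rTensor H lam) (comul h)) = lam h • 1)

/-- A Hopf algebra is cosemisimple if its dual is semisimple; equivalently (by the dual
Maschke theorem) if it admits a normalized two-sided integral `λ ∈ H*`. -/
abbrev IsCosemisimple (k : Type) [CommRing k] (H : Type) [Ring H] [HopfAlgebra k H] : Prop :=
  IsCosemisimpleWith k H (Coalgebra.comul (R := k))

/-!
Let `S` be the antipode and `Λ` the two-sided integral of `H` with `ε(Λ) = 1`. The functional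
`λ(x) = Tr(y ↦ x S²(y))` is a nondegenerate left cointegral with `λ(Λ) = 1`, it satisfies
`λ(x y) = λ(y S²(x))`, and the distinguished group-like element forces `S` to have finite order. So
`D := λ(1) = Tr(S²)` is a sum of roots of unity, hence an algebraic integer.

`D` is nonzero: in the Wedderburn decomposition `H = ∏ Mat(dᵢ)` one has `λ(x) = ∑ tr(xᵢ wᵢ)`, and
`S²` is conjugation by `w = (wᵢ)`. After rescaling, each `wᵢ` has finite order, so
`Tr(S²) = ∑ tr(wᵢ) tr(wᵢ⁻¹) = ∑ |tr(wᵢ)|²`. If this vanished, so would `λ` on the center, yet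
`λ(Λ) = 1`. With `D ≠ 0`, `λ` is also a right cointegral.

Computing traces with a dual family of the projective module `H_R` shows that `λ` restricts to a
functional `λ_R` on `H_R` and that `D Λ` comes from an integral `Λ_R` of `H_R`. Both normalizations
`ε(Λ_R)` and `λ_R(1)` equal `D`, which divides a nonzero integer in `R` and so remains nonzero in
every field whose characteristic is large. Maschke's theorem and its dual apply there.
-/

open Coalgebra HopfAlgebra

section HitActions

variable {R C : Type*} [CommRing R] [AddCommGroup C] [Module R C]

/-- The left hit action `f ⇀ y = ∑ f(y₂) y₁` of the dual of a coalgebra, linear in `f` and `y`. -/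
noncomputable def leftHit [CoalgebraStruct R C] : Module.Dual R C →ₗ[R] C →ₗ[R] C where
  toFun f := (TensorProduct.rid R C).toLinearMap ∘ₗ f.lTensor C ∘ₗ comul
  map_add' f g := by ext; simp [LinearMap.lTensor_add]
  map_smul' r f := by ext; simp [LinearMap.lTensor_smul]

/-- The right hit action `y ↼ f = ∑ f(y₁) y₂` of the dual of a coalgebra, linear in `f` and `y`. -/
noncomputable def rightHit [CoalgebraStruct R C] : Module.Dual R C →ₗ[R] C →ₗ[R] C where
  toFun f := (TensorProduct.lid R C).toLinearMap ∘ₗ f.rTensor C ∘ₗ comul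
  map_add' f g := by ext; simp [LinearMap.rTensor_add]
  map_smul' r f := by ext; simp [LinearMap.rTensor_smul]

theorem leftHit_apply [CoalgebraStruct R C] (f : Module.Dual R C) (y : C) :
    leftHit f y = TensorProduct.rid R C (f.lTensor C (comul y)) := rfl

theorem rightHit_apply [CoalgebraStruct R C] (f : Module.Dual R C) (y : C) :
    rightHit f y = TensorProduct.lid R C (f.rTensor C (comul y)) := rfl

theorem leftHit_eq_sum [CoalgebraStruct R C] {I : Type*} {y : C} (𝓡 : Repr R y I)
    (f : Module.Dual R C) : leftHit f y = ∑ i ∈ 𝓡.index, f (𝓡.right i) • 𝓡.left i := by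
  simp [leftHit_apply, ← 𝓡.eq]

theorem rightHit_eq_sum [CoalgebraStruct R C] {I : Type*} {y : C} (𝓡 : Repr R y I)
    (f : Module.Dual R C) : rightHit f y = ∑ i ∈ 𝓡.index, f (𝓡.left i) • 𝓡.right i := by
  simp [rightHit_apply, ← 𝓡.eq]

theorem apply_leftHit [CoalgebraStruct R C] (f g : Module.Dual R C) (y : C) :
    f (leftHit g y) = g (rightHit f y) := by
  simp [leftHit_eq_sum (ℛ R y), rightHit_eq_sum (ℛ R y), mul_comm]

variable [Coalgebra R C]

theorem leftHit_counit (y : C) : leftHit (counit (R := R)) y = y := by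
  rw [leftHit_apply, lTensor_counit_comul, TensorProduct.rid_tmul, one_smul]

theorem rightHit_counit (y : C) : rightHit (counit (R := R)) y = y := by
  rw [rightHit_apply, rTensor_counit_comul, TensorProduct.lid_tmul, one_smul]

theorem counit_leftHit (f : Module.Dual R C) (y : C) : counit (R := R) (leftHit f y) = f y := by
  rw [apply_leftHit, rightHit_counit]

theorem counit_rightHit (f : Module.Dual R C) (y : C) : counit (R := R) (rightHit f y) = f y := by
  rw [← apply_leftHit, leftHit_counit]

theorem comul_rightHit (f : Module.Dual R C) (y : C) :
    comul (R := R) (rightHit f y) = (rightHit f).rTensor C (comul y) := by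
  have hassoc : (TensorProduct.lid R (C ⊗[R] C)).toLinearMap ∘ₗ f.rTensor (C ⊗[R] C) =
      ((TensorProduct.lid R C).toLinearMap ∘ₗ f.rTensor C).rTensor C ∘ₗ
        (TensorProduct.assoc R C C C).symm.toLinearMap := by
    ext; simp [TensorProduct.smul_tmul']
  calc comul (rightHit f y)
      = TensorProduct.lid R _ (f.rTensor _ (comul.lTensor C (comul (R := R) y))) := by
        simp [rightHit_eq_sum (ℛ R y), ← (ℛ R y).eq]
    _ = ((TensorProduct.lid R C).toLinearMap ∘ₗ f.rTensor C).rTensor C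
          (comul.rTensor C (comul y)) := by
        rw [← coassoc_symm_apply]; exact congr($hassoc _)
    _ = (rightHit f).rTensor C (comul y) := by
        rw [← LinearMap.comp_apply, ← LinearMap.rTensor_comp]; rfl

theorem leftHit_leftHit (f g : Module.Dual R C) (y : C) :
    leftHit f (leftHit g y) = leftHit (f ∘ₗ leftHit g) y := by
  have hassoc : (TensorProduct.rid R C).toLinearMap ∘ₗ
        TensorProduct.map ((TensorProduct.rid R C).toLinearMap ∘ₗ f.lTensor C) g =
      (TensorProduct.rid R C).toLinearMap ∘ₗ
        (f ∘ₗ (TensorProduct.rid R C).toLinearMap ∘ₗ g.lTensor C).lTensor C ∘ₗ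
          (TensorProduct.assoc R C C C).toLinearMap := by
    ext; simp [smul_smul]
  calc leftHit f (leftHit g y)
      = TensorProduct.rid R C (TensorProduct.map ((TensorProduct.rid R C).toLinearMap ∘ₗ
          f.lTensor C) g (comul.rTensor C (comul y))) := by
        simp [leftHit_eq_sum (ℛ R y), ← (ℛ R y).eq, leftHit_apply f]
    _ = TensorProduct.rid R C ((f ∘ₗ (TensorProduct.rid R C).toLinearMap ∘ₗ g.lTensor C).lTensor C
          (comul.lTensor C (comul y))) := by
        rw [← coassoc_apply]; exact congr($hassoc _)
    _ = leftHit (f ∘ₗ leftHit g) y := by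
        rw [← LinearMap.comp_apply _ (comul.lTensor C), ← LinearMap.lTensor_comp]; rfl

end HitActions

section Integrals

variable {R A : Type*} [CommRing R] [Ring A]

/-- `Λ` is a left integral: `h Λ = ε(h) Λ` for all `h`. -/
def IsLeftIntegral (R : Type*) {A : Type*} [CommRing R] [Ring A] [Bialgebra R A] (Λ : A) : Prop :=
  ∀ h : A, h * Λ = counit (R := R) h • Λ

/-- `Λ` is a right integral: `Λ h = ε(h) Λ` for all `h`. -/
def IsRightIntegral (R : Type*) {A : Type*} [CommRing R] [Ring A] [Bialgebra R A] (Λ : A) : Prop :=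
  ∀ h : A, Λ * h = counit (R := R) h • Λ

/-- `lam` is a left cointegral, i.e. a left integral of the dual: `∑ lam(x₂) x₁ = lam(x) 1`. -/
def IsLeftCointegral [Bialgebra R A] (lam : Module.Dual R A) : Prop :=
  ∀ x : A, leftHit lam x = lam x • 1

/-- `lam` is a right cointegral, i.e. a right integral of the dual: `∑ lam(x₁) x₂ = lam(x) 1`. -/
def IsRightCointegral [Bialgebra R A] (lam : Module.Dual R A) : Prop :=
  ∀ x : A, rightHit lam x = lam x • 1

variable [HopfAlgebra R A]

theorem sum_antipode_tmul_one_mul_comul (h : A) :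
    ∑ i ∈ (ℛ R h).index, (antipode R ((ℛ R h).left i) ⊗ₜ[R] 1) * comul ((ℛ R h).right i) =
      (1 : A) ⊗ₜ[R] h := by
  let Ψ : A ⊗[R] (A ⊗[R] A) →ₗ[R] A ⊗[R] A :=
    (LinearMap.mul' R A ∘ₗ (antipode R).rTensor A).rTensor A ∘ₗ
      (TensorProduct.assoc R A A A).symm.toLinearMap
  have hΨ (a : A) (z : A ⊗[R] A) : Ψ (a ⊗ₜ z) = (antipode R a ⊗ₜ 1) * z := by
    induction z with
    | zero => simp
    | add z w hz hw => rw [TensorProduct.tmul_add, map_add, hz, hw, mul_add]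
    | tmul b c => simp [Ψ]
  calc ∑ i ∈ (ℛ R h).index, (antipode R ((ℛ R h).left i) ⊗ₜ[R] 1) * comul ((ℛ R h).right i)
      = Ψ (comul.lTensor A (comul h)) := by simp [← (ℛ R h).eq, hΨ]
    _ = (LinearMap.mul' R A ∘ₗ (antipode R).rTensor A ∘ₗ comul).rTensor A (comul h) := by
        simp [Ψ, LinearMap.rTensor_comp]
    _ = 1 ⊗ₜ h := by
        rw [mul_antipode_rTensor_comul, LinearMap.rTensor_comp, LinearMap.comp_apply,
          rTensor_counit_comul]
        simp

theorem sum_comul_mul_one_tmul_antipode (h : A) :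
    ∑ i ∈ (ℛ R h).index, comul ((ℛ R h).left i) * ((1 : A) ⊗ₜ[R] antipode R ((ℛ R h).right i)) =
      h ⊗ₜ[R] 1 := by
  let Ψ : A ⊗[R] A ⊗[R] A →ₗ[R] A ⊗[R] A :=
    (LinearMap.mul' R A ∘ₗ (antipode R).lTensor A).lTensor A ∘ₗ
      (TensorProduct.assoc R A A A).toLinearMap
  have hΨ (a : A) (z : A ⊗[R] A) : Ψ (z ⊗ₜ a) = z * (1 ⊗ₜ antipode R a) := by
    induction z with
    | zero => simp
    | add z w hz hw => rw [TensorProduct.add_tmul, map_add, hz, hw, add_mul]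
    | tmul b c => simp [Ψ]
  calc ∑ i ∈ (ℛ R h).index, comul ((ℛ R h).left i) * ((1 : A) ⊗ₜ[R] antipode R ((ℛ R h).right i))
      = Ψ (comul.rTensor A (comul h)) := by simp [← (ℛ R h).eq, hΨ]
    _ = (LinearMap.mul' R A ∘ₗ (antipode R).lTensor A ∘ₗ comul).lTensor A (comul h) := by
        simp [Ψ, LinearMap.lTensor_comp]
    _ = h ⊗ₜ 1 := by
        rw [mul_antipode_lTensor_comul, LinearMap.lTensor_comp, LinearMap.comp_apply,
          lTensor_counit_comul]
        simp

theorem sum_lTensor_antipode_comul_mul (h : A) (z : A ⊗[R] A) :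
    ∑ i ∈ (ℛ R h).index, (antipode R).lTensor A (comul ((ℛ R h).left i) * z) *
      (1 ⊗ₜ[R] (ℛ R h).right i) = (h ⊗ₜ[R] 1) * (antipode R).lTensor A z := by
  let Ψ : A ⊗[R] A ⊗[R] A →ₗ[R] A ⊗[R] A :=
    (LinearMap.mul' R A ∘ₗ (antipode R).rTensor A).lTensor A ∘ₗ
      (TensorProduct.assoc R A A A).toLinearMap
  have hΨ : Ψ (∑ i ∈ (ℛ R h).index, comul ((ℛ R h).left i) ⊗ₜ (ℛ R h).right i) = h ⊗ₜ 1 := by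
    calc Ψ (∑ i ∈ (ℛ R h).index, comul ((ℛ R h).left i) ⊗ₜ (ℛ R h).right i)
        = Ψ (comul.rTensor A (comul h)) := by simp [← (ℛ R h).eq]
      _ = (LinearMap.mul' R A ∘ₗ (antipode R).rTensor A ∘ₗ comul).lTensor A (comul h) := by
          simp [Ψ, LinearMap.lTensor_comp]
      _ = h ⊗ₜ 1 := by
          rw [mul_antipode_rTensor_comul, LinearMap.lTensor_comp, LinearMap.comp_apply,
            lTensor_counit_comul]
          simp
  induction z with
  | zero => simp
  | add z w hz hw => simp only [mul_add, add_mul, map_add, Finset.sum_add_distrib, hz, hw]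
  | tmul x y =>
    have hmap (d : A ⊗[R] A) (c : A) :
        TensorProduct.map (LinearMap.mulRight R x) (LinearMap.mulLeft R (antipode R y))
          (Ψ (d ⊗ₜ c)) = (antipode R).lTensor A (d * (x ⊗ₜ y)) * (1 ⊗ₜ[R] c) := by
      induction d with
      | zero => simp
      | add d e hd he => simp only [TensorProduct.add_tmul, map_add, add_mul, hd, he]
      | tmul a b => simp [Ψ, antipode_mul_antidistrib, mul_assoc]
    simp_rw [← hmap, ← map_sum, hΨ]
    simp

variable {Λ : A}

theorem IsLeftIntegral.one_tmul_mul_comul (hΛ : IsLeftIntegral R Λ) (h : A) :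
    (1 ⊗ₜ[R] h) * comul (R := R) Λ = (antipode R h ⊗ₜ[R] 1) * comul (R := R) Λ := by
  calc (1 ⊗ₜ[R] h) * comul (R := R) Λ
      = ∑ i ∈ (ℛ R h).index, counit (R := R) ((ℛ R h).right i) •
          ((antipode R ((ℛ R h).left i) ⊗ₜ[R] 1) * comul (R := R) Λ) := by
        rw [← sum_antipode_tmul_one_mul_comul, Finset.sum_mul]
        refine Finset.sum_congr rfl fun i _ => ?_
        rw [mul_assoc, ← Bialgebra.comul_mul, hΛ, map_smul, mul_smul_comm]
    _ = (antipode R (leftHit (counit (R := R)) h) ⊗ₜ[R] 1) * comul (R := R) Λ := by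
        simp [leftHit_eq_sum (ℛ R h), TensorProduct.sum_tmul, Finset.sum_mul,
          ← TensorProduct.smul_tmul']
    _ = _ := by rw [leftHit_counit]

theorem IsRightIntegral.comul_mul_tmul_one (hΛ : IsRightIntegral R Λ) (h : A) :
    comul (R := R) Λ * (h ⊗ₜ[R] 1) = comul (R := R) Λ * (1 ⊗ₜ[R] antipode R h) := by
  calc comul (R := R) Λ * (h ⊗ₜ[R] 1)
      = ∑ i ∈ (ℛ R h).index, counit (R := R) ((ℛ R h).left i) •
          (comul (R := R) Λ * (1 ⊗ₜ[R] antipode R ((ℛ R h).right i))) := by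
        rw [← sum_comul_mul_one_tmul_antipode, Finset.mul_sum]
        refine Finset.sum_congr rfl fun i _ => ?_
        rw [← mul_assoc, ← Bialgebra.comul_mul, hΛ, map_smul, smul_mul_assoc]
    _ = comul (R := R) Λ * (1 ⊗ₜ[R] antipode R (rightHit (counit (R := R)) h)) := by
        simp [rightHit_eq_sum (ℛ R h), TensorProduct.tmul_sum, Finset.mul_sum]
    _ = _ := by rw [rightHit_counit]

theorem IsLeftIntegral.leftHit_comp_mulLeft (hΛ : IsLeftIntegral R Λ) (f : Module.Dual R A)
    (h : A) : leftHit (f ∘ₗ LinearMap.mulLeft R h) Λ = antipode R h * leftHit f Λ := by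
  have key := congr(TensorProduct.rid R A (f.lTensor A $(hΛ.one_tmul_mul_comul h)))
  rw [← (ℛ R Λ).eq] at key
  simpa [leftHit_eq_sum (ℛ R Λ), Finset.mul_sum] using key

theorem IsRightIntegral.leftHit_comp_mulRight_antipode (hΛ : IsRightIntegral R Λ)
    (f : Module.Dual R A) (h : A) :
    leftHit (f ∘ₗ LinearMap.mulRight R (antipode R h)) Λ = leftHit f Λ * h := by
  have key := congr(TensorProduct.rid R A (f.lTensor A $(hΛ.comul_mul_tmul_one h)))
  rw [← (ℛ R Λ).eq] at key
  simpa [leftHit_eq_sum (ℛ R Λ), Finset.sum_mul] using key.symm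

theorem IsLeftIntegral.tmul_one_mul_lTensor_antipode_comul (hΛ : IsLeftIntegral R Λ) (h : A) :
    (h ⊗ₜ[R] 1) * (antipode R).lTensor A (comul Λ) =
      (antipode R).lTensor A (comul Λ) * (1 ⊗ₜ[R] h) := by
  calc (h ⊗ₜ[R] 1) * (antipode R).lTensor A (comul Λ)
      = ∑ i ∈ (ℛ R h).index, counit (R := R) ((ℛ R h).left i) •
          ((antipode R).lTensor A (comul Λ) * (1 ⊗ₜ[R] (ℛ R h).right i)) := by
        rw [← sum_lTensor_antipode_comul_mul]
        refine Finset.sum_congr rfl fun i _ => ?_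
        rw [← Bialgebra.comul_mul, hΛ, map_smul, map_smul, smul_mul_assoc]
    _ = (antipode R).lTensor A (comul Λ) * (1 ⊗ₜ[R] rightHit (counit (R := R)) h) := by
        simp [rightHit_eq_sum (ℛ R h), TensorProduct.tmul_sum, Finset.mul_sum]
    _ = _ := by rw [rightHit_counit]

end Integrals

section Maschke

/-- `e` is a separability element: `(a ⊗ 1) e = e (1 ⊗ a)` for all `a`, and the multiplication map
sends `e` to `1`. -/
structure IsSeparabilityElement {R A : Type*} [CommRing R] [Ring A] [Algebra R A]
    (e : A ⊗[R] A) : Prop where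
  tmul_one_mul (a : A) : (a ⊗ₜ[R] 1) * e = e * (1 ⊗ₜ[R] a)
  mul'_eq_one : LinearMap.mul' R A e = 1

/-- The endomorphism `m ↦ ∑ a Q(b m)` of an `A`-module, for `∑ a ⊗ b` in `A ⊗ A`; if `∑ a ⊗ b` is a
separability element, it is the `A`-linear average of the linear endomorphism `Q`. -/
noncomputable def average {R A M : Type*} [CommRing R] [Ring A] [Algebra R A] [AddCommGroup M]
    [Module R M] [Module A M] [IsScalarTower R A M] (Q : Module.End R M) :
    A ⊗[R] A →ₗ[R] Module.End R M :=
  LinearMap.mul' R (Module.End R M) ∘ₗ TensorProduct.map (Algebra.lsmul R R M).toLinearMap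
    (LinearMap.mulLeft R Q ∘ₗ (Algebra.lsmul R R M).toLinearMap)

section Average

variable {R A M : Type*} [CommRing R] [Ring A] [Algebra R A] [AddCommGroup M]
  [Module R M] [Module A M] [IsScalarTower R A M] (Q : Module.End R M)

theorem average_tmul_apply (a b : A) (m : M) : average Q (a ⊗ₜ[R] b) m = a • Q (b • m) := by
  simp [average]

theorem average_mem {N : Submodule A M} (hQ : ∀ m, Q m ∈ N) (z : A ⊗[R] A) (m : M) :
    average Q z m ∈ N := by
  induction z with
  | zero => simp
  | add z w hz hw => rw [map_add]; exact N.add_mem hz hw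
  | tmul a b => rw [average_tmul_apply]; exact N.smul_mem a (hQ _)

theorem average_eq_smul {N : Submodule A M} (hQ : ∀ m ∈ N, Q m = m) (z : A ⊗[R] A) {m : M}
    (hm : m ∈ N) : average Q z m = LinearMap.mul' R A z • m := by
  induction z with
  | zero => simp
  | add z w hz hw => rw [map_add, map_add, LinearMap.add_apply, hz, hw, add_smul]
  | tmul a b =>
    rw [average_tmul_apply, hQ _ (N.smul_mem b hm), LinearMap.mul'_apply, mul_smul]

theorem average_tmul_one_mul_apply (a : A) (z : A ⊗[R] A) (m : M) :
    average Q ((a ⊗ₜ 1) * z) m = a • average Q z m := by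
  induction z with
  | zero => simp
  | add z w hz hw => simp only [mul_add, map_add, LinearMap.add_apply, hz, hw, smul_add]
  | tmul b c => simp [average_tmul_apply, mul_smul]

theorem average_mul_one_tmul_apply (a : A) (z : A ⊗[R] A) (m : M) :
    average Q (z * (1 ⊗ₜ a)) m = average Q z (a • m) := by
  induction z with
  | zero => simp
  | add z w hz hw => simp only [add_mul, map_add, LinearMap.add_apply, hz, hw]
  | tmul b c => simp [average_tmul_apply, mul_smul]

end Average

theorem IsSeparabilityElement.isSemisimpleModule {F A : Type*} [Field F] [Ring A] [Algebra F A]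
    {e : A ⊗[F] A} (he : IsSeparabilityElement e) (M : Type*) [AddCommGroup M] [Module F M]
    [Module A M] [IsScalarTower F A M] : IsSemisimpleModule A M := by
  refine (isSemisimpleModule_iff A M).2 ⟨fun N => ?_⟩
  obtain ⟨π, hπ⟩ := (N.restrictScalars F).subtype.exists_leftInverse_of_injective
    (N.restrictScalars F).ker_subtype
  let Q : Module.End F M := (N.restrictScalars F).subtype ∘ₗ π
  have hQ (m : M) (hm : m ∈ N) : Q m = m := congr(Subtype.val ($hπ ⟨m, hm⟩))
  have average_smul (a : A) (m : M) : average Q e (a • m) = a • average Q e m := by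
    rw [← average_mul_one_tmul_apply, ← he.tmul_one_mul, average_tmul_one_mul_apply]
  let proj : M →ₗ[A] N :=
    { toFun m := ⟨average Q e m, average_mem (N := N) Q (fun m => (π m).2) e m⟩
      map_add' m n := Subtype.ext (map_add (average Q e) m n)
      map_smul' a m := Subtype.ext (average_smul a m) }
  refine ⟨_, LinearMap.isCompl_of_proj (f := proj) fun m => Subtype.ext ?_⟩
  exact (average_eq_smul Q hQ e m.2).trans (by rw [he.mul'_eq_one, one_smul])

theorem IsLeftIntegral.isSeparabilityElement {F A : Type*} [Field F] [Ring A] [HopfAlgebra F A]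
    {Λ : A} (hΛ : IsLeftIntegral F Λ) (hε : counit (R := F) Λ ≠ 0) :
    IsSeparabilityElement ((counit (R := F) Λ)⁻¹ • (antipode F).lTensor A (comul Λ)) where
  tmul_one_mul a := by
    rw [mul_smul_comm, hΛ.tmul_one_mul_lTensor_antipode_comul, smul_mul_assoc]
  mul'_eq_one := by
    rw [map_smul, mul_antipode_lTensor_comul_apply, Algebra.algebraMap_eq_smul_one, smul_smul,
      inv_mul_cancel₀ hε, one_smul]

theorem IsLeftIntegral.one_tmul {R F A : Type*} [CommRing R] [CommRing F] [Algebra R F] [Ring A]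
    [HopfAlgebra R A] {Λ : A} (hΛ : IsLeftIntegral R Λ) :
    IsLeftIntegral F ((1 : F) ⊗ₜ[R] Λ) := by
  intro h
  induction h with
  | zero => simp
  | add x y hx hy => rw [add_mul, hx, hy, map_add, add_smul]
  | tmul a x => simp [hΛ x, TensorProduct.smul_tmul']

theorem isSemisimpleRing_baseChange {R F A : Type*} [CommRing R] [Field F] [Algebra R F] [Ring A]
    [HopfAlgebra R A] {Λ : A} (hΛ : IsLeftIntegral R Λ)
    (hε : algebraMap R F (counit (R := R) Λ) ≠ 0) : IsSemisimpleRing (F ⊗[R] A) :=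
  have hε' : counit (R := F) ((1 : F) ⊗ₜ[R] Λ) ≠ 0 := by
    simpa [Algebra.algebraMap_eq_smul_one] using hε
  (hΛ.one_tmul.isSeparabilityElement hε').isSemisimpleModule _

end Maschke

section SemisimpleIntegral

theorem exists_apply_eq_one_and_mul_eq_zero {A k : Type*} [Ring A] [IsSemisimpleRing A] [Ring k]
    (χ : A →+* k) : ∃ e : A, χ e = 1 ∧ ∀ a, χ a = 0 → a * e = 0 := by
  obtain ⟨e, he, hspan⟩ := IsSemisimpleRing.ideal_eq_span_idempotent (RingHom.ker χ)
  have hχe : χ e = 0 := by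
    rw [← RingHom.mem_ker, hspan]; exact Ideal.mem_span_singleton_self e
  refine ⟨1 - e, by rw [map_sub, map_one, hχe, sub_zero], fun a ha => ?_⟩
  obtain ⟨b, rfl⟩ := Ideal.mem_span_singleton'.1 (hspan ▸ (RingHom.mem_ker.2 ha))
  rw [mul_assoc, mul_sub, mul_one, he.eq, sub_self, mul_zero]

theorem exists_isLeftIntegral_isRightIntegral (k H : Type*) [CommRing k] [Ring H] [Bialgebra k H]
    [IsSemisimpleRing H] :
    ∃ Λ : H, IsLeftIntegral k Λ ∧ IsRightIntegral k Λ ∧ counit (R := k) Λ = 1 := by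
  let χ : H →+* k := (Bialgebra.counitAlgHom k H : H →+* k)
  have hχ (h : H) : χ (h - algebraMap k H (χ h)) = 0 := by simp [χ]
  obtain ⟨a, ha1, ha⟩ := exists_apply_eq_one_and_mul_eq_zero χ
  obtain ⟨b, hb1, hb⟩ :=
    exists_apply_eq_one_and_mul_eq_zero (χ.fromOpposite fun _ _ => mul_comm _ _)
  have ha' : IsLeftIntegral k a := fun h => by
    have := ha _ (hχ h)
    rwa [sub_mul, sub_eq_zero, ← Algebra.smul_def] at this
  have hb' : IsRightIntegral k b.unop := fun h => by
    have := congr(MulOpposite.unop $(hb (.op _) (hχ h)))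
    rwa [MulOpposite.unop_mul, MulOpposite.unop_op, MulOpposite.unop_zero, mul_sub, sub_eq_zero,
      ← Algebra.commutes, ← Algebra.smul_def] at this
  have hab : a = b.unop := by
    calc a = counit (R := k) b.unop • a := by
          rw [show counit (R := k) b.unop = 1 from hb1, one_smul]
      _ = b.unop * a := (ha' _).symm
      _ = counit (R := k) a • b.unop := hb' _
      _ = b.unop := by rw [show counit (R := k) a = 1 from ha1, one_smul]
  exact ⟨a, ha', hab ▸ hb', ha1⟩

end SemisimpleIntegral

section AntipodeSquare

variable (R A : Type*) [CommRing R] [Ring A] [HopfAlgebra R A]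

/-- The square of the antipode, as an algebra endomorphism. -/
noncomputable def antipodeSq : A →ₐ[R] A :=
  AlgHom.ofLinearMap (antipode R ∘ₗ antipode R) (by simp)
    fun x y => by simp [antipode_mul_antidistrib]

variable {A} in
theorem antipodeSq_apply (x : A) : antipodeSq R A x = antipode R (antipode R x) := rfl

/-- The functional `x ↦ Tr(y ↦ x S²(y))`; for semisimple `A` it turns out to be a cointegral. -/
noncomputable def antipodeTrace : Module.Dual R A :=
  LinearMap.trace R A ∘ₗ LinearMap.mulRight R (antipodeSq R A).toLinearMap ∘ₗ LinearMap.mul R A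

theorem antipodeTrace_one : antipodeTrace R A 1 = LinearMap.trace R A (antipodeSq R A) :=
  congrArg (LinearMap.trace R A) (LinearMap.ext fun y => one_mul (antipodeSq R A y))

end AntipodeSquare

section DualFamily

variable {R M I : Type*} [CommRing R] [AddCommGroup M] [Module R M]

/-- `(x i, φ i)`, for `i ∈ s`, is a dual family of `M`: `y = ∑ φᵢ(y) xᵢ` for all `y`. -/
def IsDualFamily (s : Finset I) (x : I → M) (φ : I → Module.Dual R M) : Prop :=
  ∀ y : M, ∑ i ∈ s, φ i y • x i = y

theorem IsDualFamily.trace_eq_sum [Module.Free R M] [Module.Finite R M] {s : Finset I} {x : I → M}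
    {φ : I → Module.Dual R M} (h : IsDualFamily s x φ) (f : Module.End R M) :
    LinearMap.trace R M f = ∑ i ∈ s, φ i (f (x i)) := by
  have hf : f = ∑ i ∈ s, (φ i).smulRight (f (x i)) := by
    ext y
    simpa using congr(f $(h y)).symm
  conv_lhs => rw [hf]
  simp [LinearMap.trace_smulRight]

theorem IsDualFamily.antipodeTrace_eq_sum {A : Type*} [Ring A] [HopfAlgebra R A] [Module.Free R A]
    [Module.Finite R A] {s : Finset I} {x : I → A} {φ : I → Module.Dual R A}
    (h : IsDualFamily s x φ) :
    antipodeTrace R A = ∑ i ∈ s, φ i ∘ₗ LinearMap.mulRight R (antipodeSq R A (x i)) := by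
  ext y
  rw [LinearMap.sum_apply]
  exact h.trace_eq_sum _

theorem IsRightIntegral.leftHit_antipodeTrace {A : Type*} [Ring A] [HopfAlgebra R A]
    [Module.Free R A] [Module.Finite R A] {Λ : A} (hΛ : IsRightIntegral R Λ) :
    leftHit (antipodeTrace R A) Λ = counit (R := R) Λ • 1 := by
  let b := Module.Free.chooseBasis R A
  have hb : IsDualFamily Finset.univ b b.coord := b.sum_repr
  calc leftHit (antipodeTrace R A) Λ
      = ∑ i, leftHit (b.coord i) Λ * antipode R (b i) := by
        rw [hb.antipodeTrace_eq_sum, map_sum, LinearMap.sum_apply]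
        exact Finset.sum_congr rfl fun i _ => hΛ.leftHit_comp_mulRight_antipode _ _
    _ = ∑ j ∈ (ℛ R Λ).index, (ℛ R Λ).left j *
          antipode R (∑ i, b.coord i ((ℛ R Λ).right j) • b i) := by
        simp_rw [leftHit_eq_sum (ℛ R Λ), Finset.sum_mul, map_sum, Finset.mul_sum]
        rw [Finset.sum_comm]
        simp
    _ = counit (R := R) Λ • 1 := by
        simp_rw [hb _]
        exact sum_mul_antipode_eq_smul _

end DualFamily

/-- `Λ` is a two-sided integral with `ε(Λ) = 1`. -/
structure IsNormalizedIntegral (R : Type*) {A : Type*} [CommRing R] [Ring A] [Bialgebra R A]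
    (Λ : A) : Prop where
  left : IsLeftIntegral R Λ
  right : IsRightIntegral R Λ
  counit_eq_one : counit (R := R) Λ = 1

/-- The element `g = ∑ λ(Λ₁) Λ₂`, where `λ` is `antipodeTrace`. For a normalized integral `Λ` it is
the distinguished group-like element, measuring by `∑ λ(x₁) x₂ = λ(x) g` how far the left cointegral
`λ` is from being a right one. -/
noncomputable def distinguishedElem (R : Type*) {A : Type*} [CommRing R] [Ring A] [HopfAlgebra R A]
    (Λ : A) : A :=
  rightHit (antipodeTrace R A) Λ

namespace IsNormalizedIntegral

variable {k H : Type*} [Field k] [Ring H] [HopfAlgebra k H] [FiniteDimensional k H] {Λ : H}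

theorem leftHit_antipodeTrace (hΛ : IsNormalizedIntegral k Λ) :
    leftHit (antipodeTrace k H) Λ = 1 := by
  rw [hΛ.right.leftHit_antipodeTrace, hΛ.counit_eq_one, one_smul]

theorem leftHit_antipodeTrace_comp_mulRight_antipode (hΛ : IsNormalizedIntegral k Λ) (h : H) :
    leftHit (antipodeTrace k H ∘ₗ LinearMap.mulRight k (antipode k h)) Λ = h := by
  rw [hΛ.right.leftHit_comp_mulRight_antipode, hΛ.leftHit_antipodeTrace, one_mul]

theorem leftHit_antipodeTrace_comp_mulLeft (hΛ : IsNormalizedIntegral k Λ) (h : H) :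
    leftHit (antipodeTrace k H ∘ₗ LinearMap.mulLeft k h) Λ = antipode k h := by
  rw [hΛ.left.leftHit_comp_mulLeft, hΛ.leftHit_antipodeTrace, mul_one]

theorem dual_ext (hΛ : IsNormalizedIntegral k Λ) {f g : Module.Dual k H}
    (h : leftHit f Λ = leftHit g Λ) : f = g := by
  have hsurj : Function.Surjective (leftHit.flip Λ : Module.Dual k H →ₗ[k] H) := fun h =>
    ⟨_, hΛ.leftHit_antipodeTrace_comp_mulRight_antipode h⟩
  exact (LinearMap.injective_iff_surjective_of_finrank_eq_finrank
    Subspace.dual_finrank_eq).2 hsurj h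

theorem antipode_surjective (hΛ : IsNormalizedIntegral k Λ) :
    Function.Surjective (antipode k : H →ₗ[k] H) := by
  refine LinearMap.injective_iff_surjective.1 fun x y hxy => ?_
  rw [← hΛ.leftHit_antipodeTrace_comp_mulRight_antipode x, hxy,
    hΛ.leftHit_antipodeTrace_comp_mulRight_antipode]

theorem antipodeTrace_apply_self (hΛ : IsNormalizedIntegral k Λ) : antipodeTrace k H Λ = 1 := by
  rw [← counit_leftHit, hΛ.leftHit_antipodeTrace, Bialgebra.counit_one]

theorem isLeftCointegral_antipodeTrace (hΛ : IsNormalizedIntegral k Λ) :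
    IsLeftCointegral (antipodeTrace k H) := by
  intro x
  refine Module.eval_apply_injective k (LinearMap.ext fun f => ?_)
  have hf : f ∘ₗ leftHit (antipodeTrace k H) = f 1 • antipodeTrace k H := hΛ.dual_ext <| by
    rw [← leftHit_leftHit, hΛ.leftHit_antipodeTrace, map_smul, LinearMap.smul_apply,
      hΛ.leftHit_antipodeTrace]
    simp [leftHit_apply, Bialgebra.comul_one, Algebra.TensorProduct.one_def]
  simpa [mul_comm] using congr($hf x)

theorem antipodeTrace_mul_comm (hΛ : IsNormalizedIntegral k Λ) (x y : H) :
    antipodeTrace k H (x * y) = antipodeTrace k H (y * antipodeSq k H x) := by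
  have h : antipodeTrace k H ∘ₗ LinearMap.mulLeft k x =
      antipodeTrace k H ∘ₗ LinearMap.mulRight k (antipodeSq k H x) := hΛ.dual_ext <| by
    rw [hΛ.leftHit_antipodeTrace_comp_mulLeft, antipodeSq_apply,
      hΛ.leftHit_antipodeTrace_comp_mulRight_antipode]
  exact congr($h y)

theorem eq_zero_of_antipodeTrace_mul_eq_zero (hΛ : IsNormalizedIntegral k Λ) {y : H}
    (hy : ∀ x, antipodeTrace k H (x * y) = 0) : y = 0 := by
  obtain ⟨h, rfl⟩ := hΛ.antipode_surjective y
  have h0 : antipodeTrace k H ∘ₗ LinearMap.mulRight k (antipode k h) = 0 := LinearMap.ext hy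
  rw [← hΛ.leftHit_antipodeTrace_comp_mulRight_antipode h, h0, map_zero, LinearMap.zero_apply,
    map_zero]

theorem rightHit_antipodeTrace (hΛ : IsNormalizedIntegral k Λ) (x : H) :
    rightHit (antipodeTrace k H) x = antipodeTrace k H x • distinguishedElem k Λ := by
  refine Module.eval_apply_injective k (LinearMap.ext fun f => ?_)
  have hf : antipodeTrace k H ∘ₗ leftHit f =
      f (distinguishedElem k Λ) • antipodeTrace k H := hΛ.dual_ext <| by
    rw [← leftHit_leftHit, hΛ.isLeftCointegral_antipodeTrace, map_smul, LinearMap.smul_apply,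
      hΛ.leftHit_antipodeTrace, apply_leftHit, distinguishedElem]
  simpa [apply_leftHit, mul_comm] using congr($hf x)

theorem isGroupLikeElem_distinguishedElem (hΛ : IsNormalizedIntegral k Λ) :
    IsGroupLikeElem k (distinguishedElem k Λ) where
  counit_eq_one := (counit_rightHit _ _).trans hΛ.antipodeTrace_apply_self
  comul_eq_tmul_self := by
    calc comul (distinguishedElem k Λ)
        = ∑ i ∈ (ℛ k Λ).index, rightHit (antipodeTrace k H) ((ℛ k Λ).left i) ⊗ₜ[k]
            (ℛ k Λ).right i := by
          rw [distinguishedElem, comul_rightHit, ← (ℛ k Λ).eq, map_sum]; rfl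
      _ = distinguishedElem k Λ ⊗ₜ ∑ i ∈ (ℛ k Λ).index,
            antipodeTrace k H ((ℛ k Λ).left i) • (ℛ k Λ).right i := by
          simp_rw [hΛ.rightHit_antipodeTrace, TensorProduct.tmul_sum, TensorProduct.smul_tmul]
      _ = distinguishedElem k Λ ⊗ₜ distinguishedElem k Λ := by
          rw [← rightHit_eq_sum, distinguishedElem]

theorem antipodeTrace_antipode (hΛ : IsNormalizedIntegral k Λ) (x : H) :
    antipodeTrace k H (antipode k x) =
      antipodeTrace k H (x * distinguishedElem k Λ) := by
  rw [← hΛ.leftHit_antipodeTrace_comp_mulLeft, apply_leftHit]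
  rfl

theorem mul_distinguishedElem (hΛ : IsNormalizedIntegral k Λ) (y : H) :
    y * distinguishedElem k Λ =
      distinguishedElem k Λ * antipodeSq k H (antipodeSq k H y) := by
  set g := distinguishedElem k Λ
  refine sub_eq_zero.1 (hΛ.eq_zero_of_antipodeTrace_mul_eq_zero fun x => ?_)
  rw [mul_sub, map_sub, sub_eq_zero]
  calc antipodeTrace k H (x * (y * g))
      = antipodeTrace k H (antipode k y * antipode k x) := by
        rw [← mul_assoc, ← hΛ.antipodeTrace_antipode, antipode_mul_antidistrib]
    _ = antipodeTrace k H (antipode k (antipodeSq k H y * x)) := by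
        rw [hΛ.antipodeTrace_mul_comm, antipode_mul_antidistrib]; rfl
    _ = antipodeTrace k H (x * (g * antipodeSq k H (antipodeSq k H y))) := by
        rw [hΛ.antipodeTrace_antipode, mul_assoc, hΛ.antipodeTrace_mul_comm, mul_assoc]

theorem exists_pow_antipodeSq_eq_one (hΛ : IsNormalizedIntegral k Λ) :
    ∃ n > 0, (antipodeSq k H).toLinearMap ^ n = 1 := by
  have : Finite (GroupLike k H) := (linearIndep_groupLikeVal (R := k) (A := H)).finite
  let g : GroupLike k H := ⟨distinguishedElem k Λ, hΛ.isGroupLikeElem_distinguishedElem⟩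
  obtain ⟨n, hn, hgn⟩ := (isOfFinOrder_of_finite g).exists_pow_eq_one
  replace hgn : distinguishedElem k Λ ^ n = 1 := congr(GroupLike.val $hgn)
  have hpow (m : ℕ) (y : H) : y * distinguishedElem k Λ ^ m =
      distinguishedElem k Λ ^ m * ((antipodeSq k H).toLinearMap ^ (2 * m)) y := by
    induction m generalizing y with
    | zero => simp
    | succ m ih =>
      rw [pow_succ', ← mul_assoc, hΛ.mul_distinguishedElem, mul_assoc, ih, mul_assoc, mul_add,
        pow_add]
      rfl
  refine ⟨2 * n, by positivity, LinearMap.ext fun y => ?_⟩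
  simpa [hgn] using (hpow n y).symm

theorem trace_eq_sum (hΛ : IsNormalizedIntegral k Λ) (f : Module.End k H) :
    LinearMap.trace k H f = ∑ i ∈ (ℛ k Λ).index,
      antipodeTrace k H ((ℛ k Λ).right i * antipode k (f ((ℛ k Λ).left i))) := by
  have h : IsDualFamily (ℛ k Λ).index (ℛ k Λ).left fun i =>
      antipodeTrace k H ∘ₗ LinearMap.mulLeft k ((ℛ k Λ).right i) ∘ₗ antipode k := fun h => by
    conv_rhs => rw [← hΛ.leftHit_antipodeTrace_comp_mulRight_antipode h, leftHit_eq_sum (ℛ k Λ)]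
    rfl
  exact h.trace_eq_sum f

theorem trace_antipodeSq_comp_rightHit (hΛ : IsNormalizedIntegral k Λ) (f : Module.Dual k H) :
    LinearMap.trace k H ((antipodeSq k H).toLinearMap ∘ₗ rightHit f) =
      f Λ * antipodeTrace k H 1 := by
  calc LinearMap.trace k H ((antipodeSq k H).toLinearMap ∘ₗ rightHit f)
      = ∑ i ∈ (ℛ k Λ).index, antipodeTrace k H
          (antipode k (rightHit f ((ℛ k Λ).left i)) * (ℛ k Λ).right i) := by
        rw [hΛ.trace_eq_sum]
        exact Finset.sum_congr rfl fun i _ => (hΛ.antipodeTrace_mul_comm _ _).symm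
    _ = antipodeTrace k H
          (LinearMap.mul' k H ((antipode k).rTensor H (comul (rightHit f Λ)))) := by
        rw [comul_rightHit, ← (ℛ k Λ).eq]
        simp
    _ = f Λ * antipodeTrace k H 1 := by
        rw [mul_antipode_rTensor_comul_apply, counit_rightHit, Algebra.algebraMap_eq_smul_one,
          map_smul, smul_eq_mul]

theorem isRightCointegral_antipodeTrace (hΛ : IsNormalizedIntegral k Λ)
    (h1 : antipodeTrace k H 1 ≠ 0) : IsRightCointegral (antipodeTrace k H) := by
  have hg : antipodeTrace k H 1 • distinguishedElem k Λ = antipodeTrace k H 1 • 1 := by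
    rw [← hΛ.rightHit_antipodeTrace]
    simp [rightHit_apply, Bialgebra.comul_one, Algebra.TensorProduct.one_def]
  intro x
  rw [hΛ.rightHit_antipodeTrace, smul_right_injective H h1 hg]

end IsNormalizedIntegral

section RootsOfUnity

theorem pow_apply_of_mem_eigenspace {R M : Type*} [CommRing R] [AddCommGroup M] [Module R M]
    {T : Module.End R M} {μ : R} {x : M} (hx : x ∈ T.eigenspace μ) (m : ℕ) :
    (T ^ m) x = μ ^ m • x := by
  induction m with
  | zero => simp
  | succ m ih =>
    rw [pow_succ', Module.End.mul_apply, ih, map_smul, Module.End.mem_eigenspace_iff.1 hx,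
      smul_smul, pow_succ]

variable {k : Type*} [Field k] [IsAlgClosed k] {N : ℕ}

theorem exists_smul_pow_eq_one {A : Type*} [Ring A] [Algebra k A] [Nontrivial A] (hN : 0 < N)
    {w : A} (hw : IsUnit w) {c : k} (hc : w ^ N = algebraMap k A c) :
    ∃ a : k, a ≠ 0 ∧ (a • w) ^ N = 1 := by
  have hc0 : c ≠ 0 := by
    rintro rfl
    simpa [hc] using hw.pow N
  obtain ⟨a, ha⟩ := IsAlgClosed.exists_pow_nat_eq c⁻¹ hN
  refine ⟨a, fun h => inv_ne_zero hc0 (by rw [← ha, h, zero_pow hN.ne']), ?_⟩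
  rw [smul_pow, hc, ha, Algebra.smul_def, ← map_mul, inv_mul_cancel₀ hc0, map_one]

variable [CharZero k]

section FiniteOrder

variable {V : Type*} [AddCommGroup V] [Module k V] [FiniteDimensional k V] {T : Module.End k V}

open scoped Classical in
theorem isInternal_eigenspace_of_pow_eq_one (hN : 0 < N) (hT : T ^ N = 1) :
    DirectSum.IsInternal T.eigenspace := by
  have hss : T.IsSemisimple := Module.End.isSemisimple_of_squarefree_aeval_eq_zero
    (Polynomial.separable_X_pow_sub_C 1 (Nat.cast_ne_zero.2 hN.ne') one_ne_zero).squarefree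
    (by simp [hT])
  exact DirectSum.isInternal_submodule_of_iSupIndep_of_iSup_eq_top T.eigenspaces_iSupIndep
    hss.iSup_eigenspace_eq_top

theorem trace_pow_eq_sum_finrank_eigenspace (hN : 0 < N) (hT : T ^ N = 1) (m : ℕ) :
    LinearMap.trace k V (T ^ m) =
      ∑ μ ∈ Polynomial.nthRootsFinset N (1 : k),
        (Module.finrank k (T.eigenspace μ) : k) * μ ^ m := by
  classical
  have hmaps (μ : k) : Set.MapsTo (T ^ m) (T.eigenspace μ) (T.eigenspace μ) := fun x hx => by
    simpa [pow_apply_of_mem_eigenspace hx] using Submodule.smul_mem _ _ hx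
  have hrestrict (μ : k) : (T ^ m).restrict (hmaps μ) = μ ^ m • LinearMap.id :=
    LinearMap.ext fun x => Subtype.ext (pow_apply_of_mem_eigenspace x.2 m)
  have hroot (μ : k) (hμ : T.eigenspace μ ≠ ⊥) : μ ∈ Polynomial.nthRootsFinset N (1 : k) := by
    obtain ⟨x, hx, hx0⟩ := Submodule.exists_mem_ne_zero_of_ne_bot hμ
    have hμx := pow_apply_of_mem_eigenspace hx N
    rw [hT, Module.End.one_apply] at hμx
    exact (Polynomial.mem_nthRootsFinset hN 1).2
      (smul_left_injective k hx0 (by simpa using hμx.symm))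
  have hfin : {μ | T.eigenspace μ ≠ ⊥}.Finite := (Finset.finite_toSet _).subset hroot
  rw [LinearMap.trace_eq_sum_trace_restrict' (isInternal_eigenspace_of_pow_eq_one hN hT) hfin hmaps]
  refine Finset.sum_subset_zero_on_sdiff (fun μ hμ => hroot μ (by simpa using hμ)) (fun μ hμ => ?_)
    fun μ _ => ?_
  · have hbot : T.eigenspace μ = ⊥ := by simpa using (Finset.mem_sdiff.1 hμ).2
    simp [hbot]
  · rw [hrestrict, map_smul, LinearMap.trace_id, smul_eq_mul, mul_comm]

theorem isIntegral_trace_of_pow_eq_one (hN : 0 < N) (hT : T ^ N = 1) :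
    IsIntegral ℤ (LinearMap.trace k V T) := by
  rw [← pow_one T, trace_pow_eq_sum_finrank_eigenspace hN hT]
  refine IsIntegral.sum _ fun μ hμ => .mul (isIntegral_natCast _) (.pow (.of_pow hN ?_) 1)
  rw [(Polynomial.mem_nthRootsFinset hN 1).1 hμ]
  exact isIntegral_one

-- The eigenvalues are roots of unity, so they are algebraic and inverted by complex conjugation.
theorem exists_trace_eq_and_trace_inv_eq_conj {T' : Module.End k V} (hN : 0 < N) (hT : T ^ N = 1)
    (hT' : T * T' = 1) :
    ∃ t t' : algebraicClosure ℚ k, (t : k) = LinearMap.trace k V T ∧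
      (t' : k) = LinearMap.trace k V T' ∧
      ∀ σ : algebraicClosure ℚ k →+* ℂ, σ t' = starRingEnd ℂ (σ t) := by
  have hmem (μ : Polynomial.nthRootsFinset N (1 : k)) : (μ : k) ∈ algebraicClosure ℚ k := by
    have hμ : IsIntegral ℚ ((μ : k) ^ N) := by
      rw [(Polynomial.mem_nthRootsFinset hN 1).1 μ.2]
      exact isIntegral_one
    exact mem_algebraicClosure_iff.2 (hμ.of_pow hN).isAlgebraic
  let s (m : ℕ) : algebraicClosure ℚ k := ∑ μ : Polynomial.nthRootsFinset N (1 : k),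
    (Module.finrank k (T.eigenspace μ) : algebraicClosure ℚ k) * ⟨μ, hmem μ⟩ ^ m
  have hs (m : ℕ) : (s m : k) = LinearMap.trace k V (T ^ m) := by
    rw [trace_pow_eq_sum_finrank_eigenspace hN hT, ← Finset.sum_coe_sort]
    simp [s]
  have hinv : T' = T ^ (N - 1) := by
    rw [← one_mul T', ← hT, ← Nat.sub_add_cancel hN, pow_succ, mul_assoc, hT', mul_one,
      Nat.add_sub_cancel]
  refine ⟨s 1, s (N - 1), by rw [hs, pow_one], by rw [hs, hinv], fun σ => ?_⟩
  simp only [s, map_sum, map_mul, map_natCast, map_pow, pow_one]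
  refine Finset.sum_congr rfl fun μ _ => congrArg _ ?_
  have hμ : σ ⟨μ, hmem μ⟩ ^ N = 1 := by
    rw [← map_pow, ← map_one σ]
    exact congrArg σ (Subtype.ext ((Polynomial.mem_nthRootsFinset hN 1).1 μ.2))
  rw [← Complex.inv_eq_conj (Complex.norm_eq_one_of_pow_eq_one hμ hN.ne')]
  exact eq_inv_of_mul_eq_one_left (by rw [pow_sub_one_mul hN.ne', hμ])

end FiniteOrder

theorem exists_trace_eq_mul_and_trace_inv_eq_mul_conj {n : Type*} [Fintype n] [DecidableEq n]
    [Nonempty n] {w w' : Matrix n n k} (hN : 0 < N) (hw : w * w' = 1) {c : k}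
    (hc : w ^ N = algebraMap k _ c) :
    ∃ (a : k) (t t' : algebraicClosure ℚ k), a ≠ 0 ∧ w.trace = a⁻¹ * t ∧ w'.trace = a * t' ∧
      ∀ σ : algebraicClosure ℚ k →+* ℂ, σ t' = starRingEnd ℂ (σ t) := by
  obtain ⟨a, ha, hpow⟩ := exists_smul_pow_eq_one hN (IsUnit.of_mul_eq_one _ hw) hc
  have hinv : a • w * a⁻¹ • w' = 1 := by
    rw [smul_mul_smul_comm, mul_inv_cancel₀ ha, one_smul, hw]
  obtain ⟨t, t', ht, ht', hσ⟩ := exists_trace_eq_and_trace_inv_eq_conj hN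
    (T := Matrix.toLinAlgEquiv' (a • w)) (T' := Matrix.toLinAlgEquiv' (a⁻¹ • w'))
    (by rw [← map_pow, hpow, map_one]) (by rw [← map_mul, hinv, map_one])
  have htrace (M : Matrix n n k) :
      LinearMap.trace k (n → k) (Matrix.toLinAlgEquiv' M) = M.trace := Matrix.trace_toLin'_eq M
  rw [htrace, Matrix.trace_smul, smul_eq_mul] at ht ht'
  exact ⟨a, t, t', ha, by rw [ht, inv_mul_cancel_left₀ ha],
    by rw [ht', mul_inv_cancel_left₀ ha], hσ⟩

theorem trace_eq_zero_of_sum_trace_mul_trace_inv_eq_zero {I : Type*} [Fintype I] {n : I → Type*}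
    [∀ i, Fintype (n i)] [∀ i, DecidableEq (n i)] [∀ i, Nonempty (n i)]
    {w w' : Π i, Matrix (n i) (n i) k} (hN : 0 < N) (hw : w * w' = 1)
    (hc : ∀ i, ∃ c, w i ^ N = algebraMap k _ c)
    (h0 : ∑ i, (w i).trace * (w' i).trace = 0) (i : I) : (w i).trace = 0 := by
  choose c hc using hc
  choose a t t' ha ht ht' hconj using fun i =>
    exists_trace_eq_mul_and_trace_inv_eq_mul_conj hN congr($hw i) (hc i)
  have : Algebra.IsAlgebraic ℚ (algebraicClosure ℚ k) := algebraicClosure.isAlgebraic ℚ k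
  let σ : algebraicClosure ℚ k →+* ℂ := (IsAlgClosed.lift : algebraicClosure ℚ k →ₐ[ℚ] ℂ)
  have hsum : ∑ i, t i * t' i = 0 := by
    rw [← ZeroMemClass.coe_eq_zero, ← h0, AddSubmonoidClass.coe_finsetSum]
    refine Finset.sum_congr rfl fun i _ => ?_
    rw [ht, ht', mul_mul_mul_comm, inv_mul_cancel₀ (ha i), one_mul, MulMemClass.coe_mul]
  have hnorm : ∑ i, Complex.normSq (σ (t i)) = 0 := by
    have hσ := congr(σ $hsum)
    simp only [map_sum, map_mul, hconj, Complex.mul_conj, map_zero] at hσ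
    exact_mod_cast hσ
  have hi := (Finset.sum_eq_zero_iff_of_nonneg fun i _ => Complex.normSq_nonneg _).1 hnorm i
    (Finset.mem_univ i)
  rw [Complex.normSq_eq_zero, map_eq_zero] at hi
  rw [ht, hi, ZeroMemClass.coe_zero, mul_zero]

end RootsOfUnity

theorem exists_apply_eq_algebraMap_of_mem_center {R I : Type*} [CommRing R] {n : I → Type*}
    [∀ i, Fintype (n i)] [∀ i, DecidableEq (n i)] {z : Π i, Matrix (n i) (n i) R}
    (hz : z ∈ Subalgebra.center R (Π i, Matrix (n i) (n i) R)) (i : I) :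
    ∃ c, z i = algebraMap R _ c := by
  rw [Subalgebra.center_pi] at hz
  exact (Algebra.IsCentral.mem_center_iff R).1 (hz i (Set.mem_univ i))

theorem pow_mem_center_of_mul_eq_apply_mul {R A : Type*} [CommRing R] [Ring A]
    [Algebra R A] {T : Module.End R A} {w : A} (h : ∀ x, w * x = T x * w) {N : ℕ} (hN : T ^ N = 1) :
    w ^ N ∈ Subalgebra.center R A := by
  have hpow (m : ℕ) (x : A) : w ^ m * x = (T ^ m) x * w ^ m := by
    induction m generalizing x with
    | zero => simp
    | succ m ih => rw [pow_succ, mul_assoc, h, ← mul_assoc, ih, mul_assoc, pow_succ T]; rfl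
  exact Subalgebra.mem_center_iff.2 fun x => by rw [hpow, hN, Module.End.one_apply]

section TwistedTrace

variable {I : Type*} {n : I → Type*} [∀ i, Fintype (n i)]

theorem exists_eq_sum_trace_mul [Fintype I] {R : Type*} [CommRing R]
    (lam : Module.Dual R (Π i, Matrix (n i) (n i) R)) :
    ∃ w : Π i, Matrix (n i) (n i) R, ∀ x, lam x = ∑ i, (x i * w i).trace := by
  classical
  let w (i : I) : Matrix (n i) (n i) R :=
    .of fun b a => lam (Pi.single i (Matrix.single a b 1))
  have hlam : lam = ∑ i, Matrix.traceLinearMap (n i) R R ∘ₗ LinearMap.mulRight R (w i) ∘ₗ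
      LinearMap.proj i := by
    refine LinearMap.pi_ext' fun i => Matrix.ext_linearMap _ fun a b => LinearMap.ext_ring ?_
    simp only [LinearMap.comp_apply, LinearMap.sum_apply, Matrix.singleLinearMap_apply,
      LinearMap.coe_single, LinearMap.proj_apply, LinearMap.mulRight_apply,
      Matrix.traceLinearMap_apply]
    rw [Fintype.sum_eq_single i fun j hj => by simp [Pi.single_eq_of_ne hj]]
    simp [w, Matrix.trace_single_mul]
  exact ⟨w, fun x => by simp [hlam]⟩

theorem trace_mulLeft_mul_mulRight [Fintype I] {R : Type*} [CommRing R]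
    (a b : Π i, Matrix (n i) (n i) R) :
    LinearMap.trace R (Π i, Matrix (n i) (n i) R) (LinearMap.mulLeft R a * LinearMap.mulRight R b) =
      ∑ i, (a i).trace * (b i).trace := by
  classical
  let B := Pi.basis fun i => Matrix.stdBasis R (n i) (n i)
  rw [LinearMap.trace_eq_matrix_trace R B, Matrix.trace, Fintype.sum_sigma]
  refine Finset.sum_congr rfl fun i _ => ?_
  rw [Fintype.sum_prod_type, Matrix.trace, Matrix.trace, Finset.sum_mul_sum]
  refine Finset.sum_congr rfl fun p _ => Finset.sum_congr rfl fun q _ => ?_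
  have hentry : (a i * (Matrix.single p q (1 : R) * b i)) p q = a i p p * b i q q := by
    simp [Matrix.mul_apply, Matrix.single_apply, Finset.sum_ite_eq, ite_and]
  rw [Matrix.diag_apply, LinearMap.toMatrix_apply]
  simp only [B, Pi.basis_apply, Pi.basis_repr, Module.End.mul_apply, LinearMap.mulLeft_apply,
    LinearMap.mulRight_apply, Pi.mul_apply, Pi.single_eq_same, Matrix.stdBasis_eq_single]
  exact hentry

variable {k : Type*} [Field k] {lam : Module.Dual k (Π i, Matrix (n i) (n i) k)}
  {w : Π i, Matrix (n i) (n i) k} {T : Module.End k (Π i, Matrix (n i) (n i) k)}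

theorem isUnit_of_forall_eq_sum_trace_mul [Fintype I] [∀ i, DecidableEq (n i)]
    (hw : ∀ x, lam x = ∑ i, (x i * w i).trace)
    (hlam : ∀ y, (∀ x, lam (x * y) = 0) → y = 0) : IsUnit w := by
  have hinj : Function.Injective (LinearMap.mulRight k w) := by
    refine (injective_iff_map_eq_zero _).2 fun y hy => hlam y fun x => ?_
    have hi (i : I) : y i * w i = 0 := congr($hy i)
    simp [hw, mul_assoc, hi]
  obtain ⟨w', hw'⟩ := LinearMap.injective_iff_surjective.1 hinj 1
  exact IsUnit.of_mul_eq_one_right _ hw'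

theorem mul_eq_apply_mul_of_forall_eq_sum_trace_mul [Fintype I]
    (hw : ∀ x, lam x = ∑ i, (x i * w i).trace) (hT : ∀ x y, lam (x * y) = lam (y * T x))
    (x : Π i, Matrix (n i) (n i) k) : w * x = T x * w := by
  classical
  funext i
  refine Matrix.ext_iff_trace_mul_left.2 fun y => ?_
  have h := hT x (Pi.single i y)
  rw [hw, hw, Fintype.sum_eq_single i fun j hj => by simp [Pi.single_eq_of_ne hj],
    Fintype.sum_eq_single i fun j hj => by simp [Pi.single_eq_of_ne hj]] at h
  simp only [Pi.mul_apply, Pi.single_eq_same] at h ⊢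
  rw [← mul_assoc, ← mul_assoc, Matrix.trace_mul_comm, ← mul_assoc, h]

variable [IsAlgClosed k] [CharZero k] {N : ℕ}

theorem piMatrix_apply_eq_zero_of_mem_center_of_trace_eq_zero [Finite I]
    [∀ i, DecidableEq (n i)] [∀ i, Nonempty (n i)]
    (hlam : ∀ y, (∀ x, lam (x * y) = 0) → y = 0) (hT : ∀ x y, lam (x * y) = lam (y * T x))
    (hN : 0 < N) (hTN : T ^ N = 1) (htr : LinearMap.trace k _ T = 0)
    {z : Π i, Matrix (n i) (n i) k} (hz : z ∈ Subalgebra.center k (Π i, Matrix (n i) (n i) k)) :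
    lam z = 0 := by
  have := Fintype.ofFinite I
  obtain ⟨w, hw⟩ := exists_eq_sum_trace_mul lam
  obtain ⟨w', hww', -⟩ := isUnit_iff_exists.1 (isUnit_of_forall_eq_sum_trace_mul hw hlam)
  have hcomm := mul_eq_apply_mul_of_forall_eq_sum_trace_mul hw hT
  have hTw : T = LinearMap.mulLeft k w * LinearMap.mulRight k w' := LinearMap.ext fun x => by
    rw [Module.End.mul_apply, LinearMap.mulRight_apply, LinearMap.mulLeft_apply, ← mul_assoc, hcomm,
      mul_assoc, hww', mul_one]
  have hpow (i : I) : ∃ c, w i ^ N = algebraMap k _ c :=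
    exists_apply_eq_algebraMap_of_mem_center (pow_mem_center_of_mul_eq_apply_mul hcomm hTN) i
  rw [hTw, trace_mulLeft_mul_mulRight] at htr
  refine (hw z).trans (Finset.sum_eq_zero fun i _ => ?_)
  obtain ⟨c, hc⟩ := exists_apply_eq_algebraMap_of_mem_center hz i
  rw [hc, ← Algebra.smul_def, Matrix.trace_smul,
    trace_eq_zero_of_sum_trace_mul_trace_inv_eq_zero hN hww' hpow htr, smul_zero]

theorem apply_eq_zero_of_mem_center_of_trace_eq_zero {A : Type*} [Ring A] [Algebra k A]
    [FiniteDimensional k A] [IsSemisimpleRing A] {lam : Module.Dual k A} {T : Module.End k A}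
    (hlam : ∀ y, (∀ x, lam (x * y) = 0) → y = 0) (hT : ∀ x y, lam (x * y) = lam (y * T x))
    (hN : 0 < N) (hTN : T ^ N = 1) (htr : LinearMap.trace k A T = 0) {z : A}
    (hz : z ∈ Subalgebra.center k A) : lam z = 0 := by
  obtain ⟨m, d, hd, ⟨e⟩⟩ := IsSemisimpleRing.exists_algEquiv_pi_matrix_of_isAlgClosed k A
  have hz' : e z ∈ Subalgebra.center k _ := Subalgebra.mem_center_iff.2 fun x => by
    rw [← e.apply_symm_apply x, ← map_mul, ← map_mul, Subalgebra.mem_center_iff.1 hz]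
  have hconj : (e.toLinearEquiv.conj T) ^ N = 1 := by
    rw [← map_one (e.toLinearEquiv.conjAlgEquiv k), ← hTN, map_pow]
    rfl
  have h := piMatrix_apply_eq_zero_of_mem_center_of_trace_eq_zero
    (lam := lam ∘ₗ e.symm.toLinearMap) (T := e.toLinearEquiv.conj T) (fun y hy => ?_) ?_ hN hconj
    (by rw [LinearMap.trace_conj', htr]) hz'
  · simpa using h
  · simpa using hlam (e.symm y) fun x => by simpa using hy (e x)
  · intro x y
    simpa [LinearEquiv.conj_apply] using hT (e.symm x) (e.symm y)

end TwistedTrace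

namespace IsNormalizedIntegral

variable {k H : Type*} [Field k] [IsAlgClosed k] [CharZero k] [Ring H] [HopfAlgebra k H]
  [FiniteDimensional k H] {Λ : H}

theorem isIntegral_antipodeTrace_one (hΛ : IsNormalizedIntegral k Λ) :
    IsIntegral ℤ (antipodeTrace k H 1) := by
  obtain ⟨n, hn, hpow⟩ := hΛ.exists_pow_antipodeSq_eq_one
  rw [antipodeTrace_one]
  exact isIntegral_trace_of_pow_eq_one hn hpow

theorem antipodeTrace_one_ne_zero [IsSemisimpleRing H] (hΛ : IsNormalizedIntegral k Λ) :
    antipodeTrace k H 1 ≠ 0 := fun h0 => by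
  obtain ⟨n, hn, hpow⟩ := hΛ.exists_pow_antipodeSq_eq_one
  have hcenter : Λ ∈ Subalgebra.center k H :=
    Subalgebra.mem_center_iff.2 fun x => (hΛ.left x).trans (hΛ.right x).symm
  refine one_ne_zero (α := k) (hΛ.antipodeTrace_apply_self.symm.trans ?_)
  exact apply_eq_zero_of_mem_center_of_trace_eq_zero
    (fun _ => hΛ.eq_zero_of_antipodeTrace_mul_eq_zero) hΛ.antipodeTrace_mul_comm hn
    hpow ((antipodeTrace_one k H).symm.trans h0) hcenter

end IsNormalizedIntegral

section ExtendDual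

variable {R S M N : Type*} [CommRing R] [CommRing S] [Algebra R S] [AddCommGroup M] [Module R M]
  [AddCommGroup N] [Module R N] [Module S N] [IsScalarTower R S N] {ι : M →ₗ[R] N}

/-- The extension of a functional on `M` to a functional on a base change `N` of `M`. -/
noncomputable def extendDual (hι : IsBaseChange S ι) (f : Module.Dual R M) : Module.Dual S N :=
  hι.lift (Algebra.linearMap R S ∘ₗ f)

theorem extendDual_apply (hι : IsBaseChange S ι) (f : Module.Dual R M) (x : M) :
    extendDual hι f (ι x) = algebraMap R S (f x) :=
  hι.lift_eq _ x

theorem IsDualFamily.extendDual {I : Type*} {s : Finset I} {x : I → M} {φ : I → Module.Dual R M}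
    (h : IsDualFamily s x φ) (hι : IsBaseChange S ι) :
    IsDualFamily s (fun i => ι (x i)) fun i => extendDual hι (φ i) := by
  have hid : ∑ i ∈ s, (_root_.extendDual hι (φ i)).smulRight (ι (x i)) = LinearMap.id :=
    hι.algHom_ext _ _ fun y => by
      simp only [LinearMap.sum_apply, LinearMap.smulRight_apply, extendDual_apply, algebraMap_smul,
        LinearMap.id_apply, ← map_smul, ← map_sum, h y]
  intro y
  simpa using congr($hid y)

theorem exists_isDualFamily (R M : Type*) [CommRing R] [AddCommGroup M] [Module R M]
    [Module.Finite R M] [Module.Projective R M] :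
    ∃ (n : ℕ) (x : Fin n → M) (φ : Fin n → Module.Dual R M), IsDualFamily Finset.univ x φ := by
  obtain ⟨n, f, g, -, -, hfg⟩ := Module.Finite.exists_comp_eq_id_of_projective R M
  refine ⟨n, fun i => f (Pi.single i 1), fun i => LinearMap.proj i ∘ₗ g, fun y => ?_⟩
  calc ∑ i, g y i • f (Pi.single i 1) = f (g y) := by
        conv_rhs => rw [pi_eq_sum_univ' (g y)]
        simp only [map_sum, map_smul]
    _ = y := congr($hfg y)

end ExtendDual

section HopfOrder

variable {k H R HR : Type} [Field k] [Ring H] [HopfAlgebra k H] [CommRing R] [Algebra R k]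
  [Module R H] [IsScalarTower R k H] [Ring HR] [HopfAlgebra R HR]

/-- `ι` exhibits the Hopf algebra `HR` over `R` as a Hopf order of `H`: it becomes an isomorphism
after extending scalars to `k`, and it respects the Hopf algebra structures. Finiteness and
projectivity of `HR` are assumed separately. -/
structure IsHopfOrder (k : Type) {H R HR : Type} [Field k] [Ring H] [HopfAlgebra k H] [CommRing R]
    [Algebra R k] [Module R H] [IsScalarTower R k H] [Ring HR] [HopfAlgebra R HR]
    (ι : HR →ₗ[R] H) : Prop where
  map_one : ι 1 = 1
  map_mul (x y : HR) : ι (x * y) = ι x * ι y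
  bijective_liftBaseChange : Function.Bijective (LinearMap.liftBaseChange k ι)
  map_comul (x : HR) : comul (R := k) (ι x) = ordTensor R k H HR ι (comul (R := R) x)
  map_counit (x : HR) : counit (R := k) (ι x) = algebraMap R k (counit (R := R) x)
  map_antipode (x : HR) : antipode k (ι x) = ι (antipode R x)

namespace IsHopfOrder

variable {ι : HR →ₗ[R] H}

theorem isBaseChange (hι : IsHopfOrder k ι) : IsBaseChange k ι :=
  .of_equiv (.ofBijective _ hι.bijective_liftBaseChange) (by simp)

theorem map_antipodeSq (hι : IsHopfOrder k ι) (x : HR) :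
    antipodeSq k H (ι x) = ι (antipodeSq R HR x) := by
  simp only [antipodeSq_apply, hι.map_antipode]

theorem comul_eq_sum (hι : IsHopfOrder k ι) (y : HR) : comul (R := k) (ι y) =
    ∑ i ∈ (ℛ R y).index, ι ((ℛ R y).left i) ⊗ₜ[k] ι ((ℛ R y).right i) := by
  rw [hι.map_comul, ← (ℛ R y).eq, map_sum]
  rfl

theorem map_leftHit (hι : IsHopfOrder k ι) {f : Module.Dual R HR} {g : Module.Dual k H}
    (hfg : ∀ x, g (ι x) = algebraMap R k (f x)) (y : HR) :
    leftHit g (ι y) = ι (leftHit f y) := by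
  rw [leftHit_apply, hι.comul_eq_sum, leftHit_eq_sum (ℛ R y)]
  simp [hfg]

theorem map_rightHit (hι : IsHopfOrder k ι) {f : Module.Dual R HR} {g : Module.Dual k H}
    (hfg : ∀ x, g (ι x) = algebraMap R k (f x)) (y : HR) :
    rightHit g (ι y) = ι (rightHit f y) := by
  rw [rightHit_apply, hι.comul_eq_sum, rightHit_eq_sum (ℛ R y)]
  simp [hfg]

section Finite

variable [Module.Finite R HR]

theorem finiteDimensional (hι : IsHopfOrder k ι) : FiniteDimensional k H :=
  Module.Finite.equiv hι.isBaseChange.equiv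

variable [Module.Projective R HR]

theorem exists_dual_antipodeTrace (hι : IsHopfOrder k ι) :
    ∃ lam : Module.Dual R HR, ∀ y, antipodeTrace k H (ι y) = algebraMap R k (lam y) := by
  have := hι.finiteDimensional
  obtain ⟨n, x, φ, hφ⟩ := exists_isDualFamily R HR
  refine ⟨∑ i, φ i ∘ₗ LinearMap.mulRight R (antipodeSq R HR (x i)), fun y => ?_⟩
  rw [(hφ.extendDual hι.isBaseChange).antipodeTrace_eq_sum]
  simp [hι.map_antipodeSq, ← hι.map_mul, extendDual_apply]

theorem exists_eq_antipodeTrace_one_smul (hι : IsHopfOrder k ι) {Λ : H}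
    (hΛ : IsNormalizedIntegral k Λ) :
    ∃ ΛR : HR, ι ΛR = antipodeTrace k H 1 • Λ := by
  have := hι.finiteDimensional
  obtain ⟨n, x, φ, hφ⟩ := exists_isDualFamily R HR
  have hφk := hφ.extendDual hι.isBaseChange
  refine ⟨∑ i, leftHit (φ i) (antipodeSq R HR (x i)),
    Module.eval_apply_injective k (LinearMap.ext fun f => ?_)⟩
  calc f (ι (∑ i, leftHit (φ i) (antipodeSq R HR (x i))))
      = ∑ i, f (leftHit (extendDual hι.isBaseChange (φ i)) (antipodeSq k H (ι (x i)))) := by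
        simp only [map_sum, hι.map_antipodeSq,
          hι.map_leftHit (extendDual_apply hι.isBaseChange (φ _))]
    _ = LinearMap.trace k H (rightHit f ∘ₗ (antipodeSq k H).toLinearMap) := by
        rw [hφk.trace_eq_sum]
        simp [apply_leftHit]
    _ = f (antipodeTrace k H 1 • Λ) := by
        rw [LinearMap.trace_comp_comm', hΛ.trace_antipodeSq_comp_rightHit, map_smul, smul_eq_mul,
          mul_comm]

end Finite

section Faithful

variable [FaithfulSMul R k] [Module.Flat R HR]

theorem injective (hι : IsHopfOrder k ι) : Function.Injective ι := by
  have h : ι = hι.isBaseChange.equiv ∘ TensorProduct.mk R k HR 1 := by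
    ext x; simp [IsBaseChange.equiv_tmul]
  rw [h]
  exact hι.isBaseChange.equiv.injective.comp (Module.Flat.tensorProduct_mk_injective R HR k)

theorem isLeftIntegral_of_map_eq_smul (hι : IsHopfOrder k ι) {Λ : H}
    (hΛ : IsLeftIntegral k Λ) {ΛR : HR} {c : k} (h : ι ΛR = c • Λ) : IsLeftIntegral R ΛR := by
  intro x
  apply hι.injective
  rw [hι.map_mul, map_smul, h, mul_smul_comm, hΛ, hι.map_counit, algebraMap_smul, smul_comm]

theorem isLeftCointegral_of_apply_eq (hι : IsHopfOrder k ι)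
    {lam : Module.Dual k H} (hlam : IsLeftCointegral lam) {lamR : Module.Dual R HR}
    (h : ∀ y, lam (ι y) = algebraMap R k (lamR y)) : IsLeftCointegral lamR := by
  intro y
  apply hι.injective
  rw [← hι.map_leftHit h, hlam, h, map_smul, hι.map_one, algebraMap_smul]

theorem isRightCointegral_of_apply_eq (hι : IsHopfOrder k ι)
    {lam : Module.Dual k H} (hlam : IsRightCointegral lam) {lamR : Module.Dual R HR}
    (h : ∀ y, lam (ι y) = algebraMap R k (lamR y)) : IsRightCointegral lamR := by
  intro y
  apply hι.injective
  rw [← hι.map_rightHit h, hlam, h, map_smul, hι.map_one, algebraMap_smul]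

end Faithful

end IsHopfOrder

end HopfOrder

section CosemisimpleBaseChange

variable {R F A : Type} [CommRing R]

theorem bcComul_one_tmul [CommRing F] [Algebra R F] [AddCommGroup A] [Module R A] [Coalgebra R A]
    (y : A) :
    bcComul R F A comul (1 ⊗ₜ[R] y) =
      ∑ i ∈ (ℛ R y).index, (1 ⊗ₜ[R] (ℛ R y).left i) ⊗ₜ[F] (1 ⊗ₜ[R] (ℛ R y).right i) := by
  simp [bcComul, ← (ℛ R y).eq, TensorProduct.tmul_sum]

theorem isCosemisimpleWith_baseChange [Field F] [Algebra R F] [Ring A] [Bialgebra R A]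
    {lam : Module.Dual R A} (hleft : IsLeftCointegral lam) (hright : IsRightCointegral lam)
    (h1 : algebraMap R F (lam 1) ≠ 0) :
    IsCosemisimpleWith F (F ⊗[R] A) (bcComul R F A comul) := by
  have hbc : IsBaseChange F (TensorProduct.mk R F A 1) := TensorProduct.isBaseChange R A F
  let mu : Module.Dual F (F ⊗[R] A) := (algebraMap R F (lam 1))⁻¹ • extendDual hbc lam
  have hmu (y : A) : mu (1 ⊗ₜ y) = (algebraMap R F (lam 1))⁻¹ * algebraMap R F (lam y) :=
    congr(_ * $(extendDual_apply hbc lam y))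
  refine ⟨mu, (hmu 1).trans (inv_mul_cancel₀ h1), fun h => ?_, fun h => ?_⟩
  · suffices (TensorProduct.rid F _).toLinearMap ∘ₗ mu.lTensor _ ∘ₗ bcComul R F A comul =
        mu.smulRight 1 from congr($this h)
    refine hbc.algHom_ext _ _ fun y => ?_
    have key := congr((algebraMap R F (lam 1))⁻¹ • (1 : F) ⊗ₜ[R] $(hleft y))
    rw [leftHit_eq_sum (ℛ R y)] at key
    simpa [bcComul_one_tmul, hmu, TensorProduct.tmul_sum, Finset.smul_sum, mul_smul,
      Algebra.TensorProduct.one_def] using key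
  · suffices (TensorProduct.lid F _).toLinearMap ∘ₗ mu.rTensor _ ∘ₗ bcComul R F A comul =
        mu.smulRight 1 from congr($this h)
    refine hbc.algHom_ext _ _ fun y => ?_
    have key := congr((algebraMap R F (lam 1))⁻¹ • (1 : F) ⊗ₜ[R] $(hright y))
    rw [rightHit_eq_sum (ℛ R y)] at key
    simpa [bcComul_one_tmul, hmu, TensorProduct.tmul_sum, Finset.smul_sum, mul_smul,
      Algebra.TensorProduct.one_def] using key

end CosemisimpleBaseChange

section Reduction

theorem algebraMap_ne_zero_of_dvd_intCast {R F : Type*} [CommRing R] [Field F] [Algebra R F] {a : R}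
    {n : ℤ} (h : a ∣ (n : R)) (hn : (n : F) ≠ 0) : algebraMap R F a ≠ 0 := fun ha =>
  hn (zero_dvd_iff.1 (by simpa [ha] using map_dvd (algebraMap R F) h))

theorem intCast_ne_zero_of_natAbs_lt (F : Type*) [AddGroupWithOne F] (p : ℕ) [CharP F p] {n : ℤ}
    (hn : n ≠ 0) (hnp : n.natAbs < p) : (n : F) ≠ 0 := by
  rw [Ne, CharP.intCast_eq_zero_iff F p]
  exact fun hdvd => hnp.not_ge (Int.natAbs_le_of_dvd_ne_zero hdvd hn)

theorem exists_intCast_dvd_of_isIntegral_algebraMap {R K : Type*} [CommRing R] [IsDomain R]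
    [CharZero R] [CommRing K] [Algebra R K] [FaithfulSMul R K] {a : R} (ha : a ≠ 0)
    (hint : IsIntegral ℤ (algebraMap R K a)) : ∃ n : ℤ, n ≠ 0 ∧ a ∣ (n : R) := by
  have hint' : IsIntegral ℤ a := (isIntegral_algHom_iff (algebraMap R K).toIntAlgHom
    (FaithfulSMul.algebraMap_injective R K)).1 hint
  exact hint'.isAlgebraic.exists_nonzero_dvd (mem_nonZeroDivisors_of_ne_zero ha)

theorem reduction_mod_p_semisimple_cosemisimple_general {k H R HR : Type} [Field k] [IsAlgClosed k]
    [CharZero k] [Ring H] [HopfAlgebra k H] [IsSemisimpleRing H] [CommRing R] [Algebra R k]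
    [FaithfulSMul R k] [Module R H] [IsScalarTower R k H] [Ring HR] [HopfAlgebra R HR]
    [Module.Finite R HR] [Module.Projective R HR] {ι : HR →ₗ[R] H} (hι : IsHopfOrder k ι) :
    ∃ n : ℤ, n ≠ 0 ∧ ∀ (F : Type) [Field F] [Algebra R F], (n : F) ≠ 0 →
      IsSemisimpleRing (F ⊗[R] HR) ∧ IsCosemisimpleWith F (F ⊗[R] HR) (bcComul R F HR comul) := by
  have := hι.finiteDimensional
  have : IsDomain R := (FaithfulSMul.algebraMap_injective R k).isDomain
  have : CharZero R := (algebraMap R k).charZero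
  obtain ⟨Λ, hleft, hright, hε⟩ := exists_isLeftIntegral_isRightIntegral k H
  have hΛ : IsNormalizedIntegral k Λ := ⟨hleft, hright, hε⟩
  have hD : antipodeTrace k H 1 ≠ 0 := hΛ.antipodeTrace_one_ne_zero
  obtain ⟨ΛR, hΛR⟩ := hι.exists_eq_antipodeTrace_one_smul hΛ
  obtain ⟨lamR, hlamR⟩ := hι.exists_dual_antipodeTrace
  have hlam1 : algebraMap R k (lamR 1) = antipodeTrace k H 1 := by rw [← hlamR, hι.map_one]
  have hεΛR : counit (R := R) ΛR = lamR 1 := FaithfulSMul.algebraMap_injective R k <| by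
    rw [← hι.map_counit, hΛR, map_smul, hε, hlam1, smul_eq_mul, mul_one]
  obtain ⟨n, hn, hdvd⟩ := exists_intCast_dvd_of_isIntegral_algebraMap (K := k) (a := lamR 1)
    (fun h => hD (by rw [← hlam1, h, map_zero])) (hlam1 ▸ hΛ.isIntegral_antipodeTrace_one)
  refine ⟨n, hn, fun F _ _ hnF => ?_⟩
  have hF : algebraMap R F (lamR 1) ≠ 0 := algebraMap_ne_zero_of_dvd_intCast hdvd hnF
  exact ⟨isSemisimpleRing_baseChange (hι.isLeftIntegral_of_map_eq_smul hleft hΛR) (hεΛR ▸ hF),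
    isCosemisimpleWith_baseChange
      (hι.isLeftCointegral_of_apply_eq hΛ.isLeftCointegral_antipodeTrace hlamR)
      (hι.isRightCointegral_of_apply_eq (hΛ.isRightCointegral_antipodeTrace hD) hlamR) hF⟩

end Reduction

/-- Let `H` be a semisimple Hopf algebra over `k` (hence cosemisimple), with a Hopf
`R`-order `H_R` over a finitely generated subring `R ⊆ k`.  Then for all sufficiently
large primes `p` and all `ψ : R → F̄_p`, the reduction `H_p = H_R ⊗_R F̄_p` is a
semisimple and cosemisimple Hopf algebra over `F̄_p`. -/
theorem reduction_mod_p_semisimple_cosemisimple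
    (k : Type) [Field k] [IsAlgClosed k] [CharZero k]
    (H : Type) [Ring H] [HopfAlgebra k H] [FiniteDimensional k H] [IsSemisimpleRing H]
    (R : Subring k) (hfg : ∃ s : Finset k, Subring.closure (s : Set k) = R)
    (HR : Type) [Ring HR] [HopfAlgebra R HR] [Module.Finite R HR] [Module.Projective R HR]
    (ι : HR →ₗ[R] H) (hone : ι 1 = 1) (hmul : ∀ x y : HR, ι (x * y) = ι x * ι y)
    (horder : Function.Bijective (LinearMap.liftBaseChange k ι))
    (hcomul : ∀ x : HR, Coalgebra.comul (R := k) (ι x) =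
        ordTensor R k H HR ι (Coalgebra.comul (R := R) x))
    (hcounit : ∀ x : HR, Coalgebra.counit (R := k) (ι x) =
        algebraMap R k (Coalgebra.counit (R := R) x))
    (hanti : ∀ x : HR,
        HopfAlgebra.antipode (R := k) (ι x) = ι (HopfAlgebra.antipode (R := R) x)) :
    ∃ N : ℕ, ∀ p : ℕ, ∀ hp : p.Prime, N ≤ p →
      haveI : Fact p.Prime := ⟨hp⟩
      ∀ ψ : R →+* AlgebraicClosure (ZMod p),
      letI := ψ.toAlgebra
      IsSemisimpleRing (AlgebraicClosure (ZMod p) ⊗[R] HR) ∧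
      IsCosemisimpleWith (AlgebraicClosure (ZMod p)) (AlgebraicClosure (ZMod p) ⊗[R] HR)
        (bcComul R (AlgebraicClosure (ZMod p)) HR (Coalgebra.comul (R := R))) := by
  obtain ⟨n, hn, hred⟩ := reduction_mod_p_semisimple_cosemisimple_general (k := k) (ι := ι)
    ⟨hone, hmul, horder, hcomul, hcounit, hanti⟩
  exact ⟨n.natAbs + 1, fun p hp hnp ψ =>
    have : Fact p.Prime := ⟨hp⟩
    let := ψ.toAlgebra
    hred _ (intCast_ne_zero_of_natAbs_lt _ p hn hnp)⟩
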